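/- arXiv:math/0509720 — 2 statements merged into one kernel-verified Lean document; each statement's English description precedes it below -/
import Mathlib

section
/- Fix n ≥ 1, t > 0 and (x',y') ∈ ℝ^{n+1}×ℝ^n. If (x,y) ∈ ℝ^{n+1}×ℝ^n satisfies x_i = y_i for some i ∈ {1,…,n}, then the partial derivative ∂/∂x_i of the function x ↦ q^n_t((x,y),(x',y')) vanishes at that point: ∂q^n_t/∂x_i((x,y),(x',y')) = 0. -/
open MeasureTheory Real

/-- The centered Gaussian density with variance `t`. -/
noncomputable def gauss (t y : ℝ) : ℝ :=
  (Real.sqrt (2 * Real.pi * t))⁻¹ * Real.exp (-y ^ 2 / (2 * t))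

/-- The Gaussian cumulative distribution function `Φ_t`. -/
noncomputable def gaussCDF (t y : ℝ) : ℝ := ∫ z in Set.Iic y, gauss t z

/-- The derivative `φ'_t` of the Gaussian density. -/
noncomputable def gaussDeriv (t y : ℝ) : ℝ :=
  -y / Real.sqrt (2 * Real.pi * t ^ 3) * Real.exp (-y ^ 2 / (2 * t))

/-- The kernel `q^n_t((x,y),(x',y'))`, a `(2n+1)×(2n+1)` block determinant. -/
noncomputable def qKer (n : ℕ) (t : ℝ) (x x' : Fin (n + 1) → ℝ) (y y' : Fin n → ℝ) : ℝ :=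
  Matrix.det (Matrix.fromBlocks
    (Matrix.of fun i j : Fin (n + 1) => gauss t (x' j - x i))
    (Matrix.of fun (i : Fin (n + 1)) (j : Fin n) =>
      gaussCDF t (y' j - x i) - (if (i : ℕ) ≤ (j : ℕ) then (1 : ℝ) else 0))
    (Matrix.of fun (i : Fin n) (j : Fin (n + 1)) => gaussDeriv t (x' j - y i))
    (Matrix.of fun i j : Fin n => gauss t (y' j - y i)))

/-!
Only the row of the `k`-th upper particle depends on `x_k`, so by multilinearity of the determinant
differentiating in `x_k` differentiates that row. Since `Φ_t' = φ_t` and `φ_t' = φ'_t`, the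
differentiated row is minus the row of a lower particle placed at `x_k`. When `x_k = y_l` the
determinant therefore has two equal rows.
-/

section Calculus

theorem hasDerivAt_det_updateRow {𝕜 ι : Type*} [NontriviallyNormedField 𝕜] [Fintype ι]
    [DecidableEq ι] (M : Matrix ι ι 𝕜) (i : ι) {v : 𝕜 → ι → 𝕜} {v' : ι → 𝕜} {a : 𝕜}
    (hv : HasDerivAt v v' a) :
    HasDerivAt (fun b => (M.updateRow i (v b)).det) (M.updateRow i v').det a := by
  let detRow : (ι → 𝕜) →L[𝕜] 𝕜 :=
    { toLinearMap := Matrix.detRowAlternating.toMultilinearMap.toLinearMap M i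
      cont := LinearMap.continuous_on_pi _ }
  exact detRow.hasFDerivAt.comp_hasDerivAt a hv

theorem hasDerivAt_integral_Iic {E : Type*} [NormedAddCommGroup E] [NormedSpace ℝ E]
    [CompleteSpace E] {f : ℝ → E} {y : ℝ} (hf : Integrable f) (hy : ContinuousAt f y) :
    HasDerivAt (fun u => ∫ z in Set.Iic u, f z) (f y) y := by
  have integral_split : (fun u => ∫ z in Set.Iic u, f z) =
      fun u => (∫ z in Set.Iic y, f z) + ∫ z in y..u, f z := by
    ext u
    rw [← intervalIntegral.integral_Iic_sub_Iic hf.integrableOn hf.integrableOn, add_sub_cancel]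
  rw [integral_split]
  exact (intervalIntegral.integral_hasDerivAt_right hf.intervalIntegrable
    hf.aestronglyMeasurable.stronglyMeasurableAtFilter hy).const_add _

end Calculus

section Gauss

variable {t : ℝ}

theorem gauss_eq_gaussianPDFReal (ht : 0 ≤ t) :
    gauss t = ProbabilityTheory.gaussianPDFReal 0 t.toNNReal := by
  ext y
  simp only [gauss, ProbabilityTheory.gaussianPDFReal, Real.coe_toNNReal t ht, sub_zero]

theorem integrable_gauss (ht : 0 ≤ t) : Integrable (gauss t) := by
  rw [gauss_eq_gaussianPDFReal ht]
  exact ProbabilityTheory.integrable_gaussianPDFReal 0 _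

theorem hasDerivAt_gauss (ht : 0 < t) (y : ℝ) : HasDerivAt (gauss t) (gaussDeriv t y) y := by
  have hexponent : HasDerivAt (fun z : ℝ => -z ^ 2 / (2 * t)) (-y / t) y := by
    refine ((hasDerivAt_pow 2 y).neg.div_const (2 * t)).congr_deriv ?_
    field_simp
    ring
  have hsqrt : √(2 * π * t ^ 3) = √(2 * π * t) * t := by
    rw [show 2 * π * t ^ 3 = 2 * π * t * t ^ 2 by ring, sqrt_mul (by positivity), sqrt_sq ht.le]
  refine (hexponent.exp.const_mul (√(2 * π * t))⁻¹).congr_deriv ?_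
  rw [gaussDeriv, hsqrt]
  field_simp

theorem hasDerivAt_gaussCDF (ht : 0 < t) (y : ℝ) : HasDerivAt (gaussCDF t) (gauss t y) y :=
  hasDerivAt_integral_Iic (integrable_gauss ht.le) (hasDerivAt_gauss ht y).continuousAt

end Gauss

section Kernel

variable {n : ℕ} {t : ℝ}

/-- The row of the matrix of `qKer` that belongs to the upper particle `k` when it sits at `a`. -/
noncomputable def upperRow (t : ℝ) (x' : Fin (n + 1) → ℝ) (y' : Fin n → ℝ) (k : Fin (n + 1))
    (a : ℝ) : Fin (n + 1) ⊕ Fin n → ℝ :=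
  Sum.elim (fun j => gauss t (x' j - a))
    (fun j => gaussCDF t (y' j - a) - (if (k : ℕ) ≤ (j : ℕ) then (1 : ℝ) else 0))

/-- The row of the matrix of `qKer` that belongs to a lower particle sitting at `b`; unlike
`upperRow` it does not depend on the index of the particle. -/
noncomputable def lowerRow (t : ℝ) (x' : Fin (n + 1) → ℝ) (y' : Fin n → ℝ) (b : ℝ) :
    Fin (n + 1) ⊕ Fin n → ℝ :=
  Sum.elim (fun j => gaussDeriv t (x' j - b)) (fun j => gauss t (y' j - b))

/-- The matrix whose determinant is `qKer`, assembled from its rows. -/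
noncomputable def kernelMatrix (t : ℝ) (x x' : Fin (n + 1) → ℝ) (y y' : Fin n → ℝ) :
    Matrix (Fin (n + 1) ⊕ Fin n) (Fin (n + 1) ⊕ Fin n) ℝ :=
  Matrix.of (Sum.elim (fun k => upperRow t x' y' k (x k)) (fun l => lowerRow t x' y' (y l)))

theorem qKer_eq_det_kernelMatrix (x x' : Fin (n + 1) → ℝ) (y y' : Fin n → ℝ) :
    qKer n t x x' y y' = (kernelMatrix t x x' y y').det := by
  refine congrArg Matrix.det ?_
  ext (_ | _) (_ | _) <;> rfl

theorem kernelMatrix_update (x x' : Fin (n + 1) → ℝ) (y y' : Fin n → ℝ) (k : Fin (n + 1))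
    (a : ℝ) :
    kernelMatrix t (Function.update x k a) x' y y' =
      (kernelMatrix t x x' y y').updateRow (Sum.inl k) (upperRow t x' y' k a) := by
  ext (r | r) c
  · rcases eq_or_ne r k with rfl | hr
    · simp [kernelMatrix]
    · simp [kernelMatrix, Matrix.updateRow_apply, hr]
  · simp [kernelMatrix, Matrix.updateRow_apply]

theorem hasDerivAt_upperRow (ht : 0 < t) (x' : Fin (n + 1) → ℝ) (y' : Fin n → ℝ)
    (k : Fin (n + 1)) (a : ℝ) :
    HasDerivAt (upperRow t x' y' k) (-lowerRow t x' y' a) a := by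
  rw [hasDerivAt_pi]
  rintro (j | j)
  · exact (hasDerivAt_gauss ht _).comp_const_sub (x' j) a
  · exact ((hasDerivAt_gaussCDF ht _).comp_const_sub (y' j) a).sub_const _

theorem hasDerivAt_qKer_update (ht : 0 < t) (x x' : Fin (n + 1) → ℝ) (y y' : Fin n → ℝ)
    (k : Fin (n + 1)) (a : ℝ) :
    HasDerivAt (fun b => qKer n t (Function.update x k b) x' y y')
      ((kernelMatrix t x x' y y').updateRow (Sum.inl k) (-lowerRow t x' y' a)).det a := by
  simp only [qKer_eq_det_kernelMatrix, kernelMatrix_update]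
  exact hasDerivAt_det_updateRow _ _ (hasDerivAt_upperRow ht x' y' k a)

theorem det_updateRow_neg_lowerRow (x x' : Fin (n + 1) → ℝ) (y y' : Fin n → ℝ)
    (k : Fin (n + 1)) (l : Fin n) :
    ((kernelMatrix t x x' y y').updateRow (Sum.inl k) (-lowerRow t x' y' (y l))).det = 0 := by
  have lowerRow_eq : lowerRow t x' y' (y l) = kernelMatrix t x x' y y' (Sum.inr l) := rfl
  rw [lowerRow_eq, ← neg_one_smul ℝ, Matrix.det_updateRow_smul,
    Matrix.det_updateRow_eq_zero Sum.inr_ne_inl, mul_zero]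

theorem stmt2_general (ht : 0 < t) (x x' : Fin (n + 1) → ℝ) (y y' : Fin n → ℝ)
    (k : Fin (n + 1)) (l : Fin n) (hxy : x k = y l) :
    HasDerivAt (fun a => qKer n t (Function.update x k a) x' y y') 0 (x k) := by
  rw [hxy, ← det_updateRow_neg_lowerRow (t := t) x x' y y' k l]
  exact hasDerivAt_qKer_update ht x x' y y' k (y l)

end Kernel

/-- If `x_i = y_i`, then `∂q^n_t/∂x_i((x,y),(x',y')) = 0`. -/
theorem stmt2 (n : ℕ) (hn : 1 ≤ n) (t : ℝ) (ht : 0 < t)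
    (x x' : Fin (n + 1) → ℝ) (y y' : Fin n → ℝ)
    (i : ℕ) (hi : i < n) (hxy : x ⟨i, by omega⟩ = y ⟨i, hi⟩) :
    deriv (fun a => qKer n t (Function.update x ⟨i, by omega⟩ a) x' y y') (x ⟨i, by omega⟩)
      = 0 :=
  (stmt2_general ht x x' y y' _ ⟨i, hi⟩ hxy).deriv
end

section
/- Volume of the Gelfand–Tsetlin polytope: fix k ≥ 2 and x ∈ W^k. Let K(x) be the set of tuples (x^1, x^2, …, x^{k−1}) with x^j ∈ ℝ^j, such that, writing x^k = x, the interlacing inequalities x^{j+1}_i ≤ x^j_i ≤ x^{j+1}_{i+1} hold for all 1 ≤ j ≤ k−1 and 1 ≤ i ≤ j. Then the k(k−1)/2-dimensional Lebesgue measure of K(x) equals h_k(x)/∏_{j=1}^{k−1} j!. -/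
open MeasureTheory

/-- The Vandermonde product `h_m(z) = ∏_{i<j} (z_j − z_i)`. -/
noncomputable def vand (m : ℕ) (z : Fin m → ℝ) : ℝ :=
  ∏ j : Fin m, ∏ i ∈ Finset.Iio j, (z j - z i)

/-!
Slicing the polytope along the row `y` just below the top row `x` gives, by induction, the integral
of `vand m y` over the box of rows interlacing with `x`, so everything reduces to
`∫ vand m y = vand (m + 1) x / m!`. Row `i` of the Vandermonde matrix depends on `y i` only, hence
by the Leibniz formula and Fubini its determinant may be integrated entrywise, which yields the
determinant of `(x (i + 1) ^ (j + 1) - x i ^ (j + 1)) / (j + 1)`. Pulling the `1 / (j + 1)` out of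
the columns produces `1 / m!`, and what remains is the Vandermonde determinant of `x` after
subtracting from each row its predecessor.
-/

theorem setIntegral_Icc_pow {a b : ℝ} (hab : a ≤ b) (n : ℕ) :
    ∫ t in Set.Icc a b, t ^ n = ((n + 1 : ℕ) : ℝ)⁻¹ * (b ^ (n + 1) - a ^ (n + 1)) := by
  rw [integral_Icc_eq_integral_Ioc, ← intervalIntegral.integral_of_le hab, integral_pow,
    div_eq_inv_mul, Nat.cast_succ]

theorem prod_inv_succ_eq_inv_factorial (K : Type*) [Field K] (m : ℕ) :
    ∏ j : Fin m, (((j : ℕ) + 1 : ℕ) : K)⁻¹ = (m.factorial : K)⁻¹ := by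
  rw [Finset.prod_inv_distrib, ← Nat.cast_prod,
    Fin.prod_univ_eq_prod_range (fun j => j + 1), Finset.prod_range_add_one_eq_factorial]

section Determinants

open Matrix

theorem det_eq_det_sub_castSucc_of_col_zero_eq_one {R : Type*} [CommRing R] {n : ℕ}
    {A : Matrix (Fin (n + 1)) (Fin (n + 1)) R} (hA : ∀ i, A i 0 = 1) :
    A.det = (of fun i j : Fin n => A i.succ j.succ - A i.castSucc j.succ).det := by
  let B : Matrix (Fin (n + 1)) (Fin (n + 1)) R :=
    of (Fin.cons (A 0) fun i j => A i.succ j - A i.castSucc j)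
  have hAB : A.det = B.det :=
    det_eq_of_forall_row_eq_smul_add_pred (fun _ => 1) (fun _ => rfl) fun i j => by simp [B]
  have hB_zero : B 0 0 = 1 := hA 0
  have hB_succ (i : Fin n) : B i.succ 0 = 0 := by simp [B, hA]
  rw [hAB, det_succ_column_zero, Fin.sum_univ_succ]
  simp only [hB_zero, hB_succ, mul_zero, zero_mul, Finset.sum_const_zero, add_zero, Fin.val_zero,
    pow_zero, one_mul]
  rfl

theorem integral_det_pi {ι 𝕜 : Type*} [Fintype ι] [DecidableEq ι] [RCLike 𝕜] {α : ι → Type*}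
    [∀ i, MeasurableSpace (α i)] {μ : (i : ι) → Measure (α i)} [∀ i, SigmaFinite (μ i)]
    {f : (i : ι) → ι → α i → 𝕜} (hf : ∀ i j, Integrable (f i j) (μ i)) :
    ∫ y, (of fun i j => f i j (y i)).det ∂Measure.pi μ =
      (of fun i j => ∫ t, f i j t ∂μ i).det := by
  have leibniz (M : Matrix ι ι 𝕜) :
      M.det = ∑ σ : Equiv.Perm ι, ((Equiv.Perm.sign σ : ℤ) : 𝕜) * ∏ i, M i (σ i) := by
    rw [← det_transpose, det_apply']
    rfl
  simp only [leibniz, of_apply]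
  rw [integral_finsetSum _ fun σ _ =>
    (Integrable.fintype_prod_dep fun i => hf i (σ i)).const_mul _]
  simp only [integral_const_mul, integral_fintype_prod_eq_prod fun i => f i _]

end Determinants

section Vandermonde

theorem vand_eq_det_vandermonde (m : ℕ) (z : Fin m → ℝ) :
    vand m z = (Matrix.vandermonde z).det := by
  rw [Matrix.det_vandermonde, vand]
  exact Finset.prod_comm' (by simp)

theorem continuous_vand (m : ℕ) : Continuous (vand m) := by
  unfold vand
  fun_prop

theorem vand_nonneg {m : ℕ} {z : Fin m → ℝ} (hz : Monotone z) : 0 ≤ vand m z :=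
  Finset.prod_nonneg fun _ _ => Finset.prod_nonneg fun _ hi =>
    sub_nonneg.2 (hz (Finset.mem_Iio.1 hi).le)

theorem vand_succ_eq_det_pow_sub_pow (m : ℕ) (x : Fin (m + 1) → ℝ) :
    vand (m + 1) x = (Matrix.of fun i j : Fin m =>
      x i.succ ^ ((j : ℕ) + 1) - x i.castSucc ^ ((j : ℕ) + 1)).det := by
  rw [vand_eq_det_vandermonde,
    det_eq_det_sub_castSucc_of_col_zero_eq_one (by simp [Matrix.vandermonde_apply])]
  rfl

end Vandermonde

section InterlacingBox

/-- The box of all rows `y` interlacing with `x`, that is `x i ≤ y i ≤ x (i + 1)` for every `i`. -/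
def interlacingBox {m : ℕ} (x : Fin (m + 1) → ℝ) : Set (Fin m → ℝ) :=
  Set.Icc (Fin.init x) (Fin.tail x)

variable {m : ℕ} {x : Fin (m + 1) → ℝ}

theorem mem_interlacingBox {y : Fin m → ℝ} :
    y ∈ interlacingBox x ↔ ∀ i, x i.castSucc ≤ y i ∧ y i ≤ x i.succ :=
  forall_and.symm

theorem measurableSet_interlacingBox : MeasurableSet (interlacingBox x) :=
  measurableSet_Icc

theorem monotone_of_mem_interlacingBox {y : Fin m → ℝ} (hy : y ∈ interlacingBox x) :
    Monotone y := by
  rw [mem_interlacingBox] at hy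
  cases m with
  | zero => exact Subsingleton.monotone y
  | succ m => exact Fin.monotone_iff_le_succ.2 fun i => (hy i.castSucc).2.trans (hy i.succ).1

theorem volume_restrict_interlacingBox :
    (volume : Measure (Fin m → ℝ)).restrict (interlacingBox x) =
      Measure.pi fun i => volume.restrict (Set.Icc (x i.castSucc) (x i.succ)) := by
  rw [← Measure.restrict_pi_pi, Set.pi_univ_Icc]
  rfl

theorem setIntegral_vand_interlacingBox (hx : Monotone x) :
    ∫ y in interlacingBox x, vand m y = vand (m + 1) x / m.factorial := by
  have integrable_pow (i j : Fin m) : Integrable (fun t : ℝ => t ^ (j : ℕ))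
      (volume.restrict (Set.Icc (x i.castSucc) (x i.succ))) :=
    (continuous_pow _).integrableOn_Icc
  calc ∫ y in interlacingBox x, vand m y
      = ∫ y, (Matrix.of fun i j : Fin m => y i ^ (j : ℕ)).det
          ∂Measure.pi fun i => volume.restrict (Set.Icc (x i.castSucc) (x i.succ)) := by
        simp only [vand_eq_det_vandermonde, volume_restrict_interlacingBox]
        rfl
    _ = (Matrix.of fun i j : Fin m =>
          ∫ t in Set.Icc (x i.castSucc) (x i.succ), t ^ (j : ℕ)).det :=
        integral_det_pi integrable_pow
    _ = (Matrix.of fun i j : Fin m => (((j : ℕ) + 1 : ℕ) : ℝ)⁻¹ *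
          (x i.succ ^ ((j : ℕ) + 1) - x i.castSucc ^ ((j : ℕ) + 1))).det := by
        simp only [setIntegral_Icc_pow (hx (Fin.castSucc_le_succ _))]
    _ = (∏ j : Fin m, (((j : ℕ) + 1 : ℕ) : ℝ)⁻¹) * vand (m + 1) x := by
        rw [vand_succ_eq_det_pow_sub_pow, ← Matrix.det_mul_row]
        rfl
    _ = vand (m + 1) x / m.factorial := by
        rw [prod_inv_succ_eq_inv_factorial ℝ, inv_mul_eq_div]

theorem setLIntegral_vand_div_interlacingBox (hx : Monotone x) {c : ℝ} (hc : 0 ≤ c) :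
    ∫⁻ y in interlacingBox x, ENNReal.ofReal (vand m y / c) =
      ENNReal.ofReal (vand (m + 1) x / (c * m.factorial)) := by
  have integrable : IntegrableOn (vand m) (interlacingBox x) :=
    (continuous_vand m).integrableOn_Icc
  have nonneg : 0 ≤ᵐ[volume.restrict (interlacingBox x)] fun y => vand m y / c := by
    filter_upwards [ae_restrict_mem measurableSet_interlacingBox] with y hy
    exact div_nonneg (vand_nonneg (monotone_of_mem_interlacingBox hy)) hc
  rw [← ofReal_integral_eq_lintegral_ofReal (integrable.div_const c) nonneg, integral_div,
    setIntegral_vand_interlacingBox hx, div_div, mul_comm]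

end InterlacingBox

section Snoc

variable {n : ℕ} {α : Fin (n + 1) → Type*} [∀ i, MeasurableSpace (α i)]

theorem measurable_snoc :
    Measurable fun z : ((j : Fin n) → α j.castSucc) × α (Fin.last n) => Fin.snoc z.1 z.2 := by
  refine measurable_pi_iff.2 (Fin.lastCases ?_ fun j => ?_)
  · simpa only [Fin.snoc_last] using measurable_snd
  · simpa only [Fin.snoc_castSucc, Function.comp_def] using
      (measurable_pi_apply j).comp measurable_fst

variable (μ : (i : Fin (n + 1)) → Measure (α i)) [∀ i, SigmaFinite (μ i)]

theorem measurePreserving_snoc :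
    MeasurePreserving
      (fun z : ((j : Fin n) → α j.castSucc) × α (Fin.last n) => Fin.snoc z.1 z.2)
      ((Measure.pi fun j : Fin n => μ j.castSucc).prod (μ (Fin.last n))) (Measure.pi μ) := by
  refine ⟨measurable_snoc, (Measure.pi_eq fun s hs => ?_).symm⟩
  have preimage_pi :
      (fun z : ((j : Fin n) → α j.castSucc) × α (Fin.last n) => Fin.snoc z.1 z.2) ⁻¹'
          Set.univ.pi s =
        (Set.univ.pi fun j : Fin n => s j.castSucc) ×ˢ s (Fin.last n) := by
    ext z
    simp [Fin.forall_fin_succ']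
  rw [Measure.map_apply measurable_snoc (.univ_pi hs), preimage_pi, Measure.prod_prod,
    Measure.pi_pi, Fin.prod_univ_castSucc]

theorem pi_apply_eq_lintegral_snoc {s : Set ((i : Fin (n + 1)) → α i)} (hs : MeasurableSet s) :
    Measure.pi μ s =
      ∫⁻ y, Measure.pi (fun j : Fin n => μ j.castSucc) {p | Fin.snoc p y ∈ s}
        ∂μ (Fin.last n) := by
  rw [← (measurePreserving_snoc μ).measure_preimage hs.nullMeasurableSet,
    Measure.prod_apply_symm (measurable_snoc hs)]
  rfl

end Snoc

section GelfandTsetlin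

/-- The space of possible rows of index `j` in a Gelfand–Tsetlin pattern; indices start at `0`, so
such a row has `j + 1` entries. -/
abbrev PatternRow {n : ℕ} (j : Fin n) : Type := Fin ((j : ℕ) + 1) → ℝ

/-- The polytope of Gelfand–Tsetlin patterns with top row `x`: each row interlaces with the next
one. The top row is not part of the pattern; it is appended as a row of index `n`. -/
def gelfandTsetlinPolytope {n : ℕ} (x : Fin (n + 1) → ℝ) :
    Set ((j : Fin n) → PatternRow j) :=
  {p | ∀ j : Fin n, p j ∈ interlacingBox (Fin.snoc (α := PatternRow) p x j.succ)}

variable {n : ℕ}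

theorem mem_gelfandTsetlinPolytope_succ {x : Fin (n + 2) → ℝ}
    {p : (j : Fin (n + 1)) → PatternRow j} :
    p ∈ gelfandTsetlinPolytope x ↔
      (∀ j : Fin n, p j.castSucc ∈ interlacingBox (p j.succ)) ∧
        p (Fin.last n) ∈ interlacingBox x := by
  refine Fin.forall_fin_succ'.trans (and_congr (forall_congr' fun j => ?_) ?_)
  · exact iff_of_eq (congrArg (p j.castSucc ∈ interlacingBox ·)
      (Fin.snoc_castSucc (α := PatternRow) x p j.succ))
  · exact iff_of_eq (congrArg (p (Fin.last n) ∈ interlacingBox ·)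
      (Fin.snoc_last (α := PatternRow) x p))

theorem snoc_mem_gelfandTsetlinPolytope {x : Fin (n + 2) → ℝ} {y : Fin (n + 1) → ℝ}
    {p : (j : Fin n) → PatternRow j} :
    Fin.snoc (α := PatternRow) p y ∈ gelfandTsetlinPolytope x ↔
      y ∈ interlacingBox x ∧ p ∈ gelfandTsetlinPolytope y := by
  rw [mem_gelfandTsetlinPolytope_succ, and_comm]
  simp only [Fin.snoc_last, Fin.snoc_castSucc]
  rfl

theorem measurableSet_gelfandTsetlinPolytope (x : Fin (n + 1) → ℝ) :
    MeasurableSet (gelfandTsetlinPolytope x) := by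
  have continuous_snoc : Continuous fun p => Fin.snoc (α := PatternRow) p x :=
    continuous_id.finSnoc continuous_const
  have continuous_row (j : Fin n) : Continuous fun p => Fin.snoc (α := PatternRow) p x j.succ :=
    (continuous_apply j.succ).comp continuous_snoc
  have isClosed : IsClosed (gelfandTsetlinPolytope x) := by
    simp only [gelfandTsetlinPolytope, Set.ofPred_forall]
    exact isClosed_iInter fun j =>
      (isClosed_le (continuous_row j).finInit (continuous_apply j)).inter
        (isClosed_le (continuous_apply j) (continuous_row j).finTail)
  exact isClosed.measurableSet

theorem volume_gelfandTsetlinPolytope {x : Fin (n + 1) → ℝ} (hx : Monotone x) :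
    volume (gelfandTsetlinPolytope x) =
      ENNReal.ofReal (vand (n + 1) x / ∏ j ∈ Finset.range n, ((j + 1).factorial : ℝ)) := by
  induction n with
  | zero =>
    have eq_univ : gelfandTsetlinPolytope x = Set.univ :=
      Set.eq_univ_of_forall fun _ j => j.elim0
    simp [eq_univ, volume_pi, vand_eq_det_vandermonde]
  | succ n ih =>
    calc volume (gelfandTsetlinPolytope x)
        = ∫⁻ y, volume {p | y ∈ interlacingBox x ∧ p ∈ gelfandTsetlinPolytope y} := by
          simp only [← snoc_mem_gelfandTsetlinPolytope]
          exact pi_apply_eq_lintegral_snoc _ (measurableSet_gelfandTsetlinPolytope x)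
      _ = ∫⁻ y in interlacingBox x, volume (gelfandTsetlinPolytope y) := by
          rw [← lintegral_indicator measurableSet_interlacingBox]
          refine lintegral_congr fun y => ?_
          by_cases hy : y ∈ interlacingBox x <;> simp [hy]
      _ = ∫⁻ y in interlacingBox x,
            ENNReal.ofReal (vand (n + 1) y / ∏ j ∈ Finset.range n, ((j + 1).factorial : ℝ)) :=
          setLIntegral_congr_fun measurableSet_interlacingBox fun y hy =>
            ih (monotone_of_mem_interlacingBox hy)
      _ = ENNReal.ofReal
            (vand (n + 2) x / ∏ j ∈ Finset.range (n + 1), ((j + 1).factorial : ℝ)) := by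
          rw [setLIntegral_vand_div_interlacingBox hx (by positivity), Finset.prod_range_succ]

end GelfandTsetlin

/-- Volume of the Gelfand–Tsetlin polytope: for `x ∈ W^k`, the set of
Gelfand–Tsetlin patterns `(x^1, …, x^{k−1})` interlacing with top row `x^k = x`
has `k(k−1)/2`-dimensional Lebesgue measure `h_k(x) / ∏_{j=1}^{k−1} j!`. -/
theorem stmt8 (k : ℕ) (hk : 2 ≤ k) (x : Fin k → ℝ) (hx : Monotone x) :
    volume {p : (j : Fin (k - 1)) → (Fin ((j : ℕ) + 1) → ℝ) |
      (∀ (j : ℕ) (hj : j + 1 < k - 1) (i : ℕ) (hi : i < j + 1),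
        p ⟨j + 1, hj⟩ ⟨i, by first | omega | (simp only [Fin.val_mk]; omega)⟩ ≤ p ⟨j, by first | omega | (simp only [Fin.val_mk]; omega)⟩ ⟨i, hi⟩ ∧
        p ⟨j, by first | omega | (simp only [Fin.val_mk]; omega)⟩ ⟨i, hi⟩ ≤ p ⟨j + 1, hj⟩ ⟨i + 1, by first | omega | (simp only [Fin.val_mk]; omega)⟩) ∧
      (∀ (i : ℕ) (hi : i < k - 1),
        x ⟨i, by first | omega | (simp only [Fin.val_mk]; omega)⟩ ≤ p ⟨k - 2, by first | omega | (simp only [Fin.val_mk]; omega)⟩ ⟨i, by first | omega | (simp only [Fin.val_mk]; omega)⟩ ∧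
        p ⟨k - 2, by first | omega | (simp only [Fin.val_mk]; omega)⟩ ⟨i, by first | omega | (simp only [Fin.val_mk]; omega)⟩ ≤ x ⟨i + 1, by first | omega | (simp only [Fin.val_mk]; omega)⟩)} =
    ENNReal.ofReal (vand k x / ∏ j ∈ Finset.range (k - 1), ((Nat.factorial (j + 1) : ℝ))) := by
  obtain ⟨m, rfl⟩ : ∃ m, k = m + 2 := ⟨k - 2, by omega⟩
  refine Eq.trans (congrArg volume (Set.ext fun p => ?_)) (volume_gelfandTsetlinPolytope hx)
  simp only [mem_gelfandTsetlinPolytope_succ, mem_interlacingBox, Fin.forall_iff]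
  exact and_congr ⟨fun h j hj => h j (by lia), fun h j hj => h j (by lia)⟩ Iff.rfl
end
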